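/- Let m ≥ 1 and let α^{(1)}_0, ..., α^{(m)}_0 be real numbers on which the Jacobi–Perron algorithm is well defined for all steps (the fractional part α^{(m)}_n − ⌊α^{(m)}_n⌋ is nonzero for every n ≥ 0). Let a^{(i)}_n = ⌊α^{(i)}_n⌋ be the resulting partial quotients and let A^{(i)}_n, for i = 1, ..., m+1, be the associated convergent numerator and denominator sequences. If each of the m+1 integer sequences (A^{(i)}_n) is a linear recurrence sequence (satisfies a linear recurrence with constant complex coefficients for all sufficiently large n), then each of the m sequences of partial quotients (a^{(i)}_n) is eventually periodic. -/

import Mathlib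

/-- The convergent numerator/denominator sequences `A⁽ⁱ⁾` of a multidimensional
continued fraction with partial quotient sequences `a⁽¹⁾, …, a⁽ᵐ⁾`, with the
index shifted by `m`:  `convA m a i n` is `A⁽ⁱ⁺¹⁾_{n - m}` of the paper. -/
def convA (m : ℕ) (a : Fin m → ℕ → ℤ) (i : Fin (m + 1)) : ℕ → ℤ
  | n =>
    if h : n ≤ m then
      if n = m then
        if hi : (i : ℕ) < m then a ⟨i, hi⟩ 0 else 1
      else
        if (i : ℕ) = m then 0 else if n = m - 1 - (i : ℕ) then 1 else 0
    else
      (∑ j : Fin m, a j (n - m) * convA m a i (n - ((j : ℕ) + 1))) +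
        convA m a i (n - (m + 1))
  termination_by n => n
  decreasing_by all_goals omega

/-- An integer sequence is a linear recurrence sequence if it satisfies, for all
sufficiently large `n`, a recurrence `s (n+k) = c₁ • s (n+k-1) + ⋯ + c_k • s n`
with constant complex coefficients. -/
def IsLinearRecurrenceSeq (s : ℕ → ℤ) : Prop :=
  ∃ k : ℕ, 1 ≤ k ∧ ∃ c : Fin k → ℂ, ∃ N : ℕ, ∀ n, N ≤ n →
    (s (n + k) : ℂ) = ∑ t : Fin k, c t * (s (n + k - 1 - (t : ℕ)) : ℂ)

/-!
The denominators `D` satisfy `D (n + 1) ≥ D n`, so a linear recurrence forces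
`D (n + 1) ≤ C * D n` for large `n`; since a partial quotient multiplies an earlier denominator in
the recurrence for `D`, the partial quotients are bounded. The vectors of convergents satisfy a
common linear recurrence of some order `d`, and any `m + 1` consecutive ones form a basis. If two
windows of `d` consecutive vectors of partial quotients agree, the linear map matching the bases in
front of them matches the next `d` convergents, hence all later ones, hence all later partial
quotients. By boundedness some window occurs twice.
-/

open Polynomial

section SeqShift

variable {R M : Type*} [CommSemiring R] [AddCommMonoid M] [Module R M]

variable (R M) in
/-- The left shift `(f n) ↦ (f (n + 1))` on sequences, through which polynomials act on sequences
and express linear recurrences. -/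
def seqShift : Module.End R (ℕ → M) := LinearMap.funLeft R M (· + 1)

theorem seqShift_pow_apply (t : ℕ) (f : ℕ → M) (n : ℕ) : (seqShift R M ^ t) f n = f (n + t) := by
  induction t generalizing f with
  | zero => simp
  | succ t ih =>
    rw [pow_succ, Module.End.mul_apply, ih, seqShift, LinearMap.funLeft_apply, add_assoc]

theorem aeval_seqShift_apply (p : R[X]) (f : ℕ → M) (n : ℕ) :
    aeval (seqShift R M) p f n = ∑ t ∈ Finset.range (p.natDegree + 1), p.coeff t • f (n + t) := by
  simp [aeval_eq_sum_range, LinearMap.sum_apply, Finset.sum_apply, seqShift_pow_apply]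

end SeqShift

theorem exists_common_linear_recurrence {R M ι : Type*} [CommRing R] [AddCommGroup M] [Module R M]
    [Finite ι] {f : ι → ℕ → M}
    (hf : ∀ i, ∃ p : R[X], p.Monic ∧ aeval (seqShift R M) p (f i) = 0) :
    ∃ (d : ℕ) (c : Fin d → R), ∀ i n, f i (n + d) = ∑ t, c t • f i (n + t) := by
  have := Fintype.ofFinite ι
  classical
  choose p hp hpf using hf
  have hmonic : (∏ i, p i).Monic := monic_prod_of_monic _ _ fun i _ => hp i
  refine ⟨(∏ i, p i).natDegree, fun t => -(∏ i, p i).coeff t, fun i n => ?_⟩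
  have hzero : aeval (seqShift R M) (∏ i, p i) (f i) = 0 := by
    rw [← Finset.prod_erase_mul _ _ (Finset.mem_univ i), map_mul, Module.End.mul_apply, hpf,
      map_zero]
  have hsum := congrFun hzero n
  rw [aeval_seqShift_apply, Finset.sum_range_succ, hmonic.coeff_natDegree, one_smul,
    Finset.sum_range] at hsum
  simpa using eq_neg_of_add_eq_zero_right hsum

theorem eq_of_linear_recurrence {R M : Type*} [Semiring R] [AddCommMonoid M] [Module R M]
    {d : ℕ} {c : Fin d → R} {f g : ℕ → M} (hf : ∀ n, f (n + d) = ∑ t, c t • f (n + t))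
    (hg : ∀ n, g (n + d) = ∑ t, c t • g (n + t))
    (hinit : ∀ s < d, f s = g s) : f = g := by
  ext s
  induction s using Nat.strong_induction_on with
  | _ s ih =>
    obtain hs | ⟨n, rfl⟩ := (lt_or_ge s d).imp_right Nat.exists_eq_add_of_le'
    · exact hinit s hs
    · rw [hf, hg]
      exact Finset.sum_congr rfl fun t _ => by rw [ih _ (by omega)]

namespace IsLinearRecurrenceSeq

theorem exists_monic_aeval_seqShift_eq_zero {s : ℕ → ℤ} (hs : IsLinearRecurrenceSeq s) :
    ∃ p : ℂ[X], p.Monic ∧ aeval (seqShift ℂ ℂ) p (fun n => (s n : ℂ)) = 0 := by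
  obtain ⟨k, -, c, N, hrec⟩ := hs
  -- The factor `X ^ N` discards the finitely many terms before the recurrence sets in.
  refine ⟨X ^ N * (X ^ k - ∑ t : Fin k, C (c t) * X ^ (k - 1 - (t : ℕ))),
    (monic_X_pow N).mul (monic_X_pow_sub ?_), ?_⟩
  · refine (degree_sum_le _ _).trans_lt ((Finset.sup_lt_iff (WithBot.bot_lt_coe k)).2 fun t _ => ?_)
    exact (degree_C_mul_X_pow_le _ _).trans_lt (Nat.cast_lt.2 (by omega))
  · ext n
    have hterm (t : Fin k) : n + N + (k - 1 - (t : ℕ)) = n + N + k - 1 - t := by omega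
    simp [seqShift_pow_apply, LinearMap.sum_apply, Finset.sum_apply, hterm,
      hrec (n + N) (Nat.le_add_left N n)]

theorem exists_succ_le_mul {s : ℕ → ℤ} (hs : IsLinearRecurrenceSeq s) (hmono : Monotone s)
    (hnonneg : 0 ≤ s 0) :
    ∃ C : ℝ, 0 ≤ C ∧ ∃ N, ∀ n, N ≤ n → (s (n + 1) : ℝ) ≤ C * s n := by
  obtain ⟨k, -, c, N, hrec⟩ := hs
  have hnorm (n : ℕ) : ‖(s n : ℂ)‖ = s n := by
    rw [Complex.norm_intCast, abs_of_nonneg (Int.cast_nonneg (hnonneg.trans (hmono n.zero_le)))]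
  refine ⟨∑ t, ‖c t‖, Finset.sum_nonneg fun _ _ => norm_nonneg _, N + k, fun n hn => ?_⟩
  obtain ⟨r, hr⟩ : ∃ r, n + 1 = r + k := ⟨n + 1 - k, by omega⟩
  rw [hr, ← hnorm, hrec r (by omega), Finset.sum_mul]
  refine norm_sum_le_of_le _ fun t _ => ?_
  rw [norm_mul, hnorm]
  exact mul_le_mul_of_nonneg_left (Int.cast_le.2 (hmono (by omega))) (norm_nonneg _)

end IsLinearRecurrenceSeq

theorem exists_period_of_window {β : Type*} {a : ℕ → β} {L N : ℕ} {F : Set β} (hF : F.Finite)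
    (hmem : ∀ n, N ≤ n → a n ∈ F)
    (hdet : ∀ r r', (∀ u < L, a (r + u) = a (r' + u)) → ∀ u, a (r + u) = a (r' + u)) :
    ∃ M q : ℕ, 1 ≤ q ∧ ∀ n, M ≤ n → a (n + q) = a n := by
  obtain ⟨r, -, r', -, hlt, heq⟩ := (Set.Ici_infinite N).exists_lt_map_eq_of_mapsTo
    (f := fun r (u : Fin L) => a (r + u)) (t := Set.univ.pi fun _ => F)
    (fun r hr u _ => hmem _ (le_add_right hr)) (Set.Finite.pi fun _ => hF)
  refine ⟨r, r' - r, by omega, fun n hn => ?_⟩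
  have h := hdet r r' (fun u hu => congrFun heq ⟨u, hu⟩) (n - r)
  rw [show r + (n - r) = n by omega, show r' + (n - r) = n + (r' - r) by omega] at h
  exact h.symm

/-- The recurrence of the convergents of a multidimensional continued fraction, for sequences in an
arbitrary module: `b n j` is the coefficient `a⁽ʲ⁺¹⁾` used in the step that computes the term of
index `n + m + 1`. -/
def IsConvergentSeq {R M : Type*} [Semiring R] [AddCommMonoid M] [Module R M] {m : ℕ}
    (b : ℕ → Fin m → R) (V : ℕ → M) : Prop :=
  ∀ n, V (n + m + 1) = (∑ j, b n j • V (n + (m - j))) + V n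

namespace IsConvergentSeq

section Semiring

variable {R M M' : Type*} [Semiring R] [AddCommMonoid M] [Module R M] [AddCommMonoid M']
  [Module R M'] {m : ℕ} {b b' : ℕ → Fin m → R} {V W : ℕ → M}

theorem map (hV : IsConvergentSeq b V) (P : M →ₗ[R] M') : IsConvergentSeq b (P ∘ V) := fun n => by
  simp [hV n]

theorem shift (hV : IsConvergentSeq b V) (r : ℕ) :
    IsConvergentSeq (fun n => b (r + n)) (fun n => V (r + n)) := fun n => by
  simpa only [add_assoc] using hV (r + n)

theorem eq_of_init (hV : IsConvergentSeq b V) (hW : IsConvergentSeq b' W) {L : ℕ}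
    (hcoeff : ∀ u < L, b u = b' u) (hinit : ∀ s ≤ m, V s = W s) {s : ℕ} (hs : s ≤ m + L) :
    V s = W s := by
  induction s using Nat.strong_induction_on with
  | _ s ih =>
    obtain hsm | ⟨n, rfl⟩ := (le_or_gt s m).imp_right Nat.exists_eq_add_of_le'
    · exact hinit s hsm
    · rw [Nat.add_succ, hV, hW, hcoeff n (by omega), ih n (by omega) (by omega)]
      congr 1
      exact Finset.sum_congr rfl fun j _ => by rw [ih _ (by omega) (by omega)]

end Semiring

section Ring

variable {R M : Type*} [Ring R] [AddCommGroup M] [Module R M] {m : ℕ}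
  {b b' : ℕ → Fin m → R} {V : ℕ → M}

theorem span_window_mono (hV : IsConvergentSeq b V) :
    Monotone fun n => Submodule.span R (Set.range fun s : Fin (m + 1) => V (n + s)) := by
  refine monotone_nat_of_le_succ fun n => Submodule.span_le.2 ?_
  have hmem {k : ℕ} (hk : n + 1 ≤ k) (hk' : k ≤ n + 1 + m) :
      V k ∈ Submodule.span R (Set.range fun s : Fin (m + 1) => V (n + 1 + s)) :=
    Submodule.subset_span ⟨⟨k - (n + 1), by omega⟩, by simp [Nat.add_sub_cancel' hk]⟩
  rintro _ ⟨s, rfl⟩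
  obtain hs | hs := Nat.eq_zero_or_pos s
  · simp only [hs, add_zero, ← sub_eq_of_eq_add' (hV n)]
    exact Submodule.sub_mem _ (hmem (by omega) (by omega)) (Submodule.sum_mem _ fun j _ =>
      Submodule.smul_mem _ _ (hmem (by omega) (by omega)))
  · exact hmem (by omega) (by omega)

theorem span_window_eq_top (hV : IsConvergentSeq b V)
    (hspan : Submodule.span R (Set.range fun s : Fin (m + 1) => V s) = ⊤) (n : ℕ) :
    Submodule.span R (Set.range fun s : Fin (m + 1) => V (n + s)) = ⊤ :=
  top_le_iff.1 (hspan.symm.le.trans (by simpa using hV.span_window_mono n.zero_le))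

theorem coeff_unique (hV : IsConvergentSeq b V) (hV' : IsConvergentSeq b' V)
    (hli : ∀ n, LinearIndependent R fun s : Fin (m + 1) => V (n + s)) : b = b' := by
  funext n j
  have hinj : Function.Injective fun j : Fin m => (⟨m - j, by omega⟩ : Fin (m + 1)) :=
    fun i j hij => by simp only [Fin.mk.injEq] at hij; omega
  exact ((hli n).comp _ hinj).eq_coords_of_eq
    (add_right_cancel ((hV n).symm.trans (hV' n))) j

end Ring

section CommRing

variable {R M : Type*} [CommRing R] [AddCommGroup M] [Module R M] {m : ℕ}
  {b : ℕ → Fin m → R} {V : ℕ → M}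

theorem linearIndependent_window (hV : IsConvergentSeq b V)
    (hspan : Submodule.span R (Set.range fun s : Fin (m + 1) => V s) = ⊤)
    (hrank : Module.finrank R M = m + 1) (n : ℕ) :
    LinearIndependent R fun s : Fin (m + 1) => V (n + s) :=
  linearIndependent_of_top_le_span_of_card_eq_finrank (hV.span_window_eq_top hspan n).ge
    (by simp [hrank])

theorem coeff_eq_of_window (hV : IsConvergentSeq b V)
    (hspan : Submodule.span R (Set.range fun s : Fin (m + 1) => V s) = ⊤)
    (hrank : Module.finrank R M = m + 1) {d : ℕ} {c : Fin d → R}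
    (hrec : ∀ n, V (n + d) = ∑ t, c t • V (n + t)) {r r' : ℕ}
    (hwin : ∀ u < d, b (r + u) = b (r' + u)) (u : ℕ) : b (r + u) = b (r' + u) := by
  have hli := hV.linearIndependent_window hspan hrank
  let basis := Module.Basis.mk (hli r) (hV.span_window_eq_top hspan r).ge
  let P : M →ₗ[R] M := basis.constr R fun s : Fin (m + 1) => V (r' + s)
  have hPinit (s : ℕ) (hs : s ≤ m) : P (V (r + s)) = V (r' + s) := by
    have h := basis.constr_basis R (fun s : Fin (m + 1) => V (r' + s)) ⟨s, Nat.lt_succ_of_le hs⟩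
    rwa [Module.Basis.mk_apply] at h
  have hPV : IsConvergentSeq (fun n => b (r + n)) fun n => P (V (r + n)) := (hV.shift r).map P
  have hP : (fun n => P (V (r + n))) = fun n => V (r' + n) := by
    refine eq_of_linear_recurrence (c := c) (fun n => ?_) (fun n => ?_) fun s hs =>
      hPV.eq_of_init (hV.shift r') hwin hPinit (hs.le.trans (Nat.le_add_left d m))
    · simp only [← add_assoc, hrec, map_sum, map_smul]
    · simp only [← add_assoc, hrec]
  exact congrFun ((hP ▸ hPV).coeff_unique (hV.shift r')
    fun n => by simpa only [add_assoc] using hli (r' + n)) u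

end CommRing

end IsConvergentSeq

section Convergents

variable {m : ℕ} (a : Fin m → ℕ → ℤ)

theorem convA_add_succ (i : Fin (m + 1)) (n : ℕ) :
    convA m a i (n + m + 1) = (∑ j, a j (n + 1) * convA m a i (n + (m - j))) + convA m a i n := by
  rw [convA, dif_neg (by omega), show n + m + 1 - m = n + 1 by omega,
    show n + m + 1 - (m + 1) = n by omega]
  congr 1
  refine Finset.sum_congr rfl fun j _ => ?_
  rw [show n + m + 1 - ((j : ℕ) + 1) = n + (m - j) by omega]

variable (R : Type*) [Ring R]

/-- The vectors of convergents `(A⁽¹⁾, …, A⁽ᵐ⁺¹⁾)` with entries in `R`. The index is shifted by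
`m + 1`, one more than in `convA`: the additional vector at `-m - 1` is the one with which the
recurrence produces the prescribed values at index `0`. -/
def convergentVec : ℕ → Fin (m + 1) → R
  | 0 => Pi.single (Fin.last m) 1
  | n + 1 => fun i => convA m a i n

theorem convergentVec_zero : convergentVec a R 0 = Pi.single (Fin.last m) 1 := rfl

theorem convergentVec_succ (n : ℕ) (i : Fin (m + 1)) :
    convergentVec a R (n + 1) i = (convA m a i n : R) := rfl

theorem convergentVec_eq_single (s : Fin (m + 1)) :
    convergentVec a R s = Pi.single s.rev 1 := by
  obtain ⟨_ | s, hs⟩ := s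
  · exact convergentVec_zero a R
  · ext i
    rw [convergentVec_succ, convA, dif_pos (by omega), if_neg (by omega)]
    simp only [Pi.single_apply, Fin.ext_iff, Fin.val_rev]
    split_ifs <;> first | omega | simp

theorem isConvergentSeq_convergentVec :
    IsConvergentSeq (fun n j => (a j n : R)) (convergentVec a R) := by
  rintro (_ | n)
  · have hsingle (j : Fin m) : convergentVec a R (m - j) = Pi.single j.castSucc 1 := by
      rw [convergentVec_eq_single a R ⟨m - j, by omega⟩]
      exact congrArg (Pi.single · 1) (Fin.ext (by simp only [Fin.val_rev, Fin.val_castSucc]; omega))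
    ext i
    rw [zero_add, convergentVec_succ, convA]
    refine Fin.lastCases ?_ (fun i => ?_) i
    · simp [hsingle, convergentVec_zero, Finset.sum_apply]
    · simp [hsingle, convergentVec_zero, Finset.sum_apply, Pi.single_apply]
  · have hpos (j : Fin m) : n + 1 + (m - j) = n + (m - j) + 1 := by omega
    ext i
    rw [add_right_comm n 1 m]
    simp [hpos, convergentVec_succ, convA_add_succ, Finset.sum_apply]

theorem span_convergentVec_eq_top :
    Submodule.span R (Set.range fun s : Fin (m + 1) => convergentVec a R s) = ⊤ := by
  simp_rw [convergentVec_eq_single]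
  simpa [Function.comp_def] using ((Pi.basisFun R (Fin (m + 1))).reindex Fin.revPerm).span_eq

theorem exists_forall_partialQuotient_eq_of_window
    (hA : ∀ i, IsLinearRecurrenceSeq (convA m a i)) :
    ∃ d, ∀ r r', (∀ u < d, ∀ j, a j (r + u) = a j (r' + u)) →
      ∀ u j, a j (r + u) = a j (r' + u) := by
  obtain ⟨d, c, hrec⟩ := exists_common_linear_recurrence (R := ℂ) (M := ℂ)
    (f := fun i n => convergentVec a ℂ n i) fun i => by
      obtain ⟨p, hp, hzero⟩ := (hA i).exists_monic_aeval_seqShift_eq_zero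
      refine ⟨p * X, hp.mul monic_X, ?_⟩
      rw [map_mul, aeval_X, Module.End.mul_apply]
      exact hzero
  refine ⟨d, fun r r' hwin u j => ?_⟩
  have hcoeff : (fun j => (a j (r + u) : ℂ)) = fun j => (a j (r' + u) : ℂ) :=
    (isConvergentSeq_convergentVec a ℂ).coeff_eq_of_window
      (span_convergentVec_eq_top a ℂ) (by simp) (c := c)
      (fun n => by ext i; simpa [Finset.sum_apply] using hrec i n)
      (fun u hu => by simp only [hwin u hu]) u
  exact Int.cast_injective (congrFun hcoeff j)

end Convergents

section Denominators

variable {m : ℕ} {a : Fin m → ℕ → ℤ}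

theorem convA_last_nonneg (ha : ∀ j n, 0 ≤ a j (n + 1)) (n : ℕ) :
    0 ≤ convA m a (Fin.last m) n := by
  induction n using Nat.strong_induction_on with
  | _ n ih =>
    obtain hn | ⟨r, rfl⟩ := (le_or_gt n m).imp_right Nat.exists_eq_add_of_le'
    · rw [convA, dif_pos hn]
      simp only [Fin.val_last, lt_irrefl, dite_false, if_true]
      split_ifs <;> simp
    · rw [Nat.add_succ, convA_add_succ]
      exact add_nonneg (Finset.sum_nonneg fun j _ => mul_nonneg (ha j r) (ih _ (by omega)))
        (ih _ (by omega))

theorem mul_convA_last_le (ha : ∀ j n, 0 ≤ a j (n + 1)) (n : ℕ) (j : Fin m) :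
    a j (n + 1) * convA m a (Fin.last m) (n + (m - j)) ≤ convA m a (Fin.last m) (n + m + 1) := by
  rw [convA_add_succ]
  refine le_add_of_le_of_nonneg ?_ (convA_last_nonneg ha n)
  exact Finset.single_le_sum
    (f := fun j : Fin m => a j (n + 1) * convA m a (Fin.last m) (n + (m - j)))
    (fun j _ => mul_nonneg (ha j n) (convA_last_nonneg ha _)) (Finset.mem_univ j)

theorem monotone_convA_last (hm : 1 ≤ m) (hfirst : ∀ n, 1 ≤ a ⟨0, hm⟩ (n + 1))
    (ha : ∀ j n, 0 ≤ a j (n + 1)) : Monotone (convA m a (Fin.last m)) := by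
  refine monotone_nat_of_le_succ fun n => ?_
  obtain hn | ⟨r, rfl⟩ := (lt_or_ge n m).imp_right Nat.exists_eq_add_of_le'
  · refine le_of_eq_of_le ?_ (convA_last_nonneg ha (n + 1))
    rw [convA, dif_pos hn.le, if_neg hn.ne, if_pos (Fin.val_last m)]
  · exact (le_mul_of_one_le_left (convA_last_nonneg ha _) (hfirst r)).trans
      (mul_convA_last_le ha r ⟨0, hm⟩)

theorem exists_partialQuotient_le (hm : 1 ≤ m) (hfirst : ∀ n, 1 ≤ a ⟨0, hm⟩ (n + 1))
    (ha : ∀ j n, 0 ≤ a j (n + 1)) (hA : IsLinearRecurrenceSeq (convA m a (Fin.last m))) :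
    ∃ (B : ℤ) (N : ℕ), ∀ n, N ≤ n → ∀ j, a j (n + 1) ≤ B := by
  have hmono := monotone_convA_last hm hfirst ha
  obtain ⟨C, hC, N, hN⟩ := hA.exists_succ_le_mul hmono (convA_last_nonneg ha 0)
  refine ⟨⌊C ^ m⌋, N + m, fun n hn j => Int.le_floor.2 ?_⟩
  have hpos : (0 : ℝ) < convA m a (Fin.last m) (n + 1) := by
    have hm_one : convA m a (Fin.last m) m = 1 := by rw [convA]; simp
    exact_mod_cast (hm_one ▸ zero_lt_one).trans_le (hmono (show m ≤ n + 1 by omega))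
  refine le_of_mul_le_mul_right ?_ hpos
  calc (a j (n + 1) : ℝ) * convA m a (Fin.last m) (n + 1)
      ≤ convA m a (Fin.last m) (n + 1 + m) := by
        rw [add_right_comm]
        exact_mod_cast (mul_le_mul_of_nonneg_left (hmono (by omega)) (ha j n)).trans
          (mul_convA_last_le ha n j)
    _ ≤ C ^ m * convA m a (Fin.last m) (n + 1) :=
        le_geom (u := fun k => (convA m a (Fin.last m) (n + 1 + k) : ℝ)) hC m
          fun k _ => hN (n + 1 + k) (by omega)

end Denominators

section JacobiPerronStep

variable {K : Type*} [Field K] [LinearOrder K] [IsStrictOrderedRing K] [FloorRing K]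

theorem one_le_floor_one_div_fract {x : K} (hx : Int.fract x ≠ 0) : 1 ≤ ⌊1 / Int.fract x⌋ := by
  rw [Int.le_floor, Int.cast_one]
  exact one_le_one_div ((Int.fract_nonneg x).lt_of_ne' hx) (Int.fract_lt_one x).le

theorem floor_nonneg_of_jacobiPerron_step {m : ℕ} (hm : 1 ≤ m) {x y : Fin m → K}
    (hfirst : y ⟨0, hm⟩ = 1 / Int.fract (x ⟨m - 1, Nat.sub_one_lt_of_lt hm⟩))
    (hstep : ∀ i : Fin m, 0 < (i : ℕ) →
      y i = Int.fract (x ⟨i - 1, (Nat.sub_le _ _).trans_lt i.isLt⟩) /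
        Int.fract (x ⟨m - 1, Nat.sub_one_lt_of_lt hm⟩)) (j : Fin m) :
    0 ≤ ⌊y j⌋ := by
  rw [Int.floor_nonneg]
  obtain hj | hj := Nat.eq_zero_or_pos j
  · rw [show j = ⟨0, hm⟩ from Fin.ext hj, hfirst]
    exact one_div_nonneg.2 (Int.fract_nonneg _)
  · rw [hstep j hj]
    exact div_nonneg (Int.fract_nonneg _) (Int.fract_nonneg _)

end JacobiPerronStep

theorem jacobiPerron_eventually_periodic_of_linear_recurrence_general (m : ℕ) (hm : 1 ≤ m)
    (a : Fin m → ℕ → ℤ) (hfirst : ∀ n, 1 ≤ a ⟨0, hm⟩ (n + 1)) (ha : ∀ j n, 0 ≤ a j (n + 1))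
    (hA : ∀ i, IsLinearRecurrenceSeq (convA m a i)) :
    ∃ N q : ℕ, 1 ≤ q ∧ ∀ n, N ≤ n → ∀ j, a j (n + q) = a j n := by
  obtain ⟨B, N, hB⟩ := exists_partialQuotient_le hm hfirst ha (hA (Fin.last m))
  obtain ⟨d, hdet⟩ := exists_forall_partialQuotient_eq_of_window a hA
  have hmem (n : ℕ) (hn : N + 1 ≤ n) :
      (fun j => a j n) ∈ Set.univ.pi fun _ : Fin m => Set.Icc 0 B := by
    obtain ⟨n, rfl⟩ := Nat.exists_eq_add_of_le' (Nat.succ_pos N |>.trans_le hn)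
    exact fun j _ => ⟨ha j n, hB n (by omega) j⟩
  obtain ⟨M, q, hq, hper⟩ := exists_period_of_window
    (Set.Finite.pi fun _ => Set.finite_Icc 0 B) hmem fun r r' hwin u =>
      funext (hdet r r' (fun u hu => congrFun (hwin u hu)) u)
  exact ⟨M, q, hq, fun n hn => congrFun (hper n hn)⟩

/-- If the Jacobi–Perron algorithm is well defined on `α⁽¹⁾₀, …, α⁽ᵐ⁾₀` and all the
sequences of convergent numerators and denominators `A⁽¹⁾, …, A⁽ᵐ⁺¹⁾` associated to
the partial quotients `a⁽ⁱ⁾ₙ = ⌊α⁽ⁱ⁾ₙ⌋` are linear recurrence sequences, then all the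
sequences of partial quotients are eventually periodic. -/
theorem jacobiPerron_eventually_periodic_of_linear_recurrence (m : ℕ) (hm : 1 ≤ m)
    (α : ℕ → Fin m → ℝ)
    (hfrac : ∀ n : ℕ, Int.fract (α n ⟨m - 1, by omega⟩) ≠ 0)
    (hstep1 : ∀ n : ℕ,
      α (n + 1) ⟨0, by omega⟩ = 1 / Int.fract (α n ⟨m - 1, by omega⟩))
    (hstep2 : ∀ n : ℕ, ∀ i : Fin m, 0 < (i : ℕ) →
      α (n + 1) i =
        Int.fract (α n ⟨(i : ℕ) - 1, (Nat.sub_le _ _).trans_lt i.isLt⟩) /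
          Int.fract (α n ⟨m - 1, by omega⟩))
    (hA : ∀ i : Fin (m + 1),
      IsLinearRecurrenceSeq (fun n => convA m (fun j n => ⌊α n j⌋) i n)) :
    ∀ j : Fin m, ∃ N q : ℕ, 1 ≤ q ∧ ∀ n, N ≤ n → ⌊α (n + q) j⌋ = ⌊α n j⌋ := by
  obtain ⟨N, q, hq, hper⟩ := jacobiPerron_eventually_periodic_of_linear_recurrence_general m hm _
    (fun n => (hstep1 n).symm ▸ one_le_floor_one_div_fract (hfrac n))
    (fun j n => floor_nonneg_of_jacobiPerron_step hm (hstep1 n) (hstep2 n) j) hA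
  exact fun j => ⟨N, q, hq, fun n hn => hper n hn j⟩
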